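/- arXiv:1604.07094 — 5 statements merged into one kernel-verified Lean document; each statement's English description precedes it below -/
import Mathlib

section
/- Let n ≥ 1 and let L be a weighted Laplacian of a path graph on n vertices. Let S = {ℓ₁ < ℓ₂ < ⋯ < ℓ_k} be a nonempty subset of {1,…,n}. Then the grounded Laplacian L_ff and every segment submatrix L_{(a→b)} appearing below are invertible, and (1/2)·tr(L_ff⁻¹) = (1/2)·tr(L_{(0→ℓ₁)}⁻¹) + (1/2)·Σ_{i=1}^{k−1} tr(L_{(ℓ_i→ℓ_{i+1})}⁻¹) + (1/2)·tr(L_{(ℓ_k→n+1)}⁻¹). -/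
open Matrix

/-- `L` is a weighted Laplacian of a path graph on `n` vertices (vertex `i` of `{1,…,n}`
corresponds to the index `⟨i-1⟩ : Fin n`): symmetric, negative on the super-diagonal,
zero outside the tridiagonal band, and all row sums zero. -/
def IsPathLaplacian {n : ℕ} (L : Matrix (Fin n) (Fin n) ℝ) : Prop :=
  L.IsSymm ∧
  (∀ i j : Fin n, (i : ℕ) + 1 = (j : ℕ) → L i j < 0) ∧
  (∀ i j : Fin n, (i : ℕ) + 2 ≤ (j : ℕ) → L i j = 0) ∧
  (∀ i : Fin n, ∑ j, L i j = 0)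

/-- `L_{(a→b)}`: the principal submatrix of `L` on the (1-based) nodes strictly between
`a` and `b`; node `j` corresponds to index `⟨j-1⟩`, i.e. the 1-based label of `i : Fin n`
is `(i : ℕ) + 1`. -/
def pseg {n : ℕ} (L : Matrix (Fin n) (Fin n) ℝ) (a b : ℕ) :
    Matrix {j : Fin n // a < (j : ℕ) + 1 ∧ (j : ℕ) + 1 < b}
      {j : Fin n // a < (j : ℕ) + 1 ∧ (j : ℕ) + 1 < b} ℝ :=
  L.submatrix (·.val) (·.val)

/-- The grounded Laplacian `L_ff`: the principal submatrix of `L` obtained by deleting the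
rows and columns indexed by `S`. -/
def grounded {n : ℕ} (L : Matrix (Fin n) (Fin n) ℝ) (S : Finset (Fin n)) :
    Matrix {i : Fin n // i ∉ S} {i : Fin n // i ∉ S} ℝ :=
  L.submatrix (·.val) (·.val)

/-!
Energy argument: a symmetric matrix `L` with zero row sums satisfies
`2 xᵀ L x = ∑ i, ∑ j, -L i j * (x i - x j) ^ 2`. For a Laplacian of a connected graph the form
therefore vanishes only on constant vectors. A kernel vector of a proper principal submatrix,
extended by zero, is such a vector and has a zero entry, so it vanishes: every proper principal
submatrix is invertible.

Two nodes in different segments have a leader strictly between them, hence are not adjacent.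
Thus `L_ff` is block diagonal with the segment submatrices as blocks, and the trace of its inverse
is the sum of the traces of the inverses of the blocks.
-/

section BlockTrace

variable {R o n : Type*} {m : o → Type*} [CommRing R] [Fintype o]
  [∀ a, Fintype (m a)] [∀ a, DecidableEq (m a)] [Fintype n] [DecidableEq n]

theorem inv_blockDiagonal' [DecidableEq o] (A : ∀ a, Matrix (m a) (m a) R)
    (hA : ∀ a, IsUnit (A a).det) :
    (blockDiagonal' A)⁻¹ = blockDiagonal' fun a => (A a)⁻¹ := by
  refine inv_eq_right_inv ?_
  simp only [← blockDiagonal'_mul, mul_nonsing_inv _ (hA _)]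
  exact blockDiagonal'_one

theorem trace_inv_eq_sum_trace_inv_of_blocks (M : Matrix n n R) (e : (Σ a, m a) ≃ n)
    (hoff : ∀ a b, a ≠ b → ∀ i j, M (e ⟨a, i⟩) (e ⟨b, j⟩) = 0)
    (hunit : ∀ a, IsUnit (M.submatrix (fun i : m a => e ⟨a, i⟩) fun i => e ⟨a, i⟩).det) :
    M⁻¹.trace = ∑ a, (M.submatrix (fun i : m a => e ⟨a, i⟩) fun i => e ⟨a, i⟩)⁻¹.trace := by
  classical
  have hblocks : M.submatrix e e =
      blockDiagonal' fun a => M.submatrix (fun i : m a => e ⟨a, i⟩) fun i => e ⟨a, i⟩ := by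
    ext ⟨a, i⟩ ⟨b, j⟩
    rcases eq_or_ne a b with rfl | hab
    · simp only [submatrix_apply, blockDiagonal'_apply_eq]
    · rw [blockDiagonal'_apply_ne _ _ _ hab, submatrix_apply, hoff a b hab]
  calc M⁻¹.trace = (M⁻¹.submatrix e e).trace := (e.sum_comp fun i => M⁻¹ i i).symm
    _ = _ := by
      rw [← inv_submatrix_equiv, hblocks, inv_blockDiagonal' _ hunit, trace_blockDiagonal']

end BlockTrace

section ExtendByZero

variable {R m n : Type*} [CommSemiring R] [Fintype m] [Fintype n] {f : m → n}

theorem extend_zero_dotProduct (hf : f.Injective) (x : m → R) (y : n → R) :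
    Function.extend f x 0 ⬝ᵥ y = x ⬝ᵥ (y ∘ f) := by
  refine (Fintype.sum_of_injective f hf _ _ (fun i hi => ?_) fun i => ?_).symm
  · rw [Function.extend_apply' _ _ _ hi, Pi.zero_apply, zero_mul]
  · rw [hf.extend_apply, Function.comp_apply]

theorem mulVec_extend_zero_comp (hf : f.Injective) (A : Matrix n n R) (x : m → R) :
    (A *ᵥ Function.extend f x 0) ∘ f = A.submatrix f f *ᵥ x := by
  ext i
  exact (dotProduct_comm _ _).trans
    ((extend_zero_dotProduct hf x (A (f i))).trans (dotProduct_comm _ _))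

end ExtendByZero

theorem two_mul_dotProduct_mulVec_of_row_sum_eq_zero {R V : Type*} [CommRing R] [Fintype V]
    {A : Matrix V V R} (hsymm : A.IsSymm) (hrow : ∀ i, ∑ j, A i j = 0) (x : V → R) :
    2 * (x ⬝ᵥ A *ᵥ x) = ∑ i, ∑ j, -A i j * (x i - x j) ^ 2 := by
  have hrows : ∑ i, ∑ j, A i j * x i ^ 2 = 0 := by
    simp only [← Finset.sum_mul, hrow, zero_mul, Finset.sum_const_zero]
  have hcols : ∑ i, ∑ j, A i j * x j ^ 2 = 0 := by
    rw [Finset.sum_comm, ← hrows]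
    simp only [hsymm.apply]
  have hexpand : ∑ i, ∑ j, -A i j * (x i - x j) ^ 2 = 2 * ∑ i, ∑ j, x i * (A i j * x j)
      - ∑ i, ∑ j, A i j * x i ^ 2 - ∑ i, ∑ j, A i j * x j ^ 2 := by
    simp only [Finset.mul_sum, ← Finset.sum_sub_distrib]
    refine Finset.sum_congr rfl fun i _ => Finset.sum_congr rfl fun j _ => ?_
    ring
  rw [hexpand, hrows, hcols, sub_zero, sub_zero]
  simp only [dotProduct, mulVec, Finset.mul_sum]

/-- `L` is a Laplacian of the graph `G` with positive edge weights `-L i j`; the diagonal is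
prescribed through the row sums. -/
structure IsWeightedLaplacian {R V : Type*} [CommRing R] [LinearOrder R] [Fintype V]
    (G : SimpleGraph V) (L : Matrix V V R) : Prop where
  isSymm : L.IsSymm
  apply_neg : ∀ ⦃i j⦄, G.Adj i j → L i j < 0
  apply_eq_zero : ∀ ⦃i j⦄, i ≠ j → ¬ G.Adj i j → L i j = 0
  row_sum : ∀ i, ∑ j, L i j = 0

namespace IsWeightedLaplacian

variable {R V : Type*} [CommRing R] [LinearOrder R] [Fintype V]
  {G : SimpleGraph V} {L : Matrix V V R} {x : V → R}

theorem apply_nonpos (hL : IsWeightedLaplacian G L) {i j : V} (hij : i ≠ j) : L i j ≤ 0 := by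
  by_cases hadj : G.Adj i j
  · exact (hL.apply_neg hadj).le
  · exact (hL.apply_eq_zero hij hadj).le

variable [IsStrictOrderedRing R]

theorem eq_of_adj (hL : IsWeightedLaplacian G L) (hx : x ⬝ᵥ L *ᵥ x = 0) {i j : V}
    (hij : G.Adj i j) : x i = x j := by
  have hnonneg (u v : V) : 0 ≤ -L u v * (x u - x v) ^ 2 := by
    rcases eq_or_ne u v with rfl | huv
    · simp
    · exact mul_nonneg (neg_nonneg.2 (hL.apply_nonpos huv)) (sq_nonneg _)
  have hsum := two_mul_dotProduct_mulVec_of_row_sum_eq_zero hL.isSymm hL.row_sum x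
  rw [hx, mul_zero, eq_comm,
    Fintype.sum_eq_zero_iff_of_nonneg fun u => Finset.sum_nonneg fun v _ => hnonneg u v] at hsum
  have hterm : -L i j * (x i - x j) ^ 2 = 0 :=
    congrFun ((Fintype.sum_eq_zero_iff_of_nonneg (hnonneg i)).1 (congrFun hsum i)) j
  have hsq := (mul_eq_zero.1 hterm).resolve_left (neg_ne_zero.2 (hL.apply_neg hij).ne)
  exact sub_eq_zero.1 (pow_eq_zero_iff two_ne_zero |>.1 hsq)

theorem eq_of_reachable (hL : IsWeightedLaplacian G L) (hx : x ⬝ᵥ L *ᵥ x = 0) {i j : V}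
    (hij : G.Reachable i j) : x i = x j := by
  obtain ⟨walk⟩ := hij
  induction walk with
  | nil => rfl
  | cons hadj _ ih => exact (hL.eq_of_adj hx hadj).trans ih

theorem det_submatrix_ne_zero (hL : IsWeightedLaplacian G L) (hG : G.Preconnected)
    {m : Type*} [Fintype m] [DecidableEq m] {f : m → V} (hf : f.Injective)
    {s : V} (hs : s ∉ Set.range f) : (L.submatrix f f).det ≠ 0 := by
  intro hdet
  obtain ⟨x, hx_ne, hx⟩ := exists_mulVec_eq_zero_iff.2 hdet
  have hform : Function.extend f x 0 ⬝ᵥ L *ᵥ Function.extend f x 0 = 0 := by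
    rw [extend_zero_dotProduct hf, mulVec_extend_zero_comp hf, hx, dotProduct_zero]
  refine hx_ne (funext fun i => ?_)
  calc x i = Function.extend f x 0 (f i) := (hf.extend_apply x 0 i).symm
    _ = Function.extend f x 0 s := hL.eq_of_reachable hform (hG _ _)
    _ = 0 := Function.extend_apply' _ _ _ hs

end IsWeightedLaplacian

namespace IsPathLaplacian

variable {n : ℕ} {L : Matrix (Fin n) (Fin n) ℝ}

theorem isWeightedLaplacian (hL : IsPathLaplacian L) :
    IsWeightedLaplacian (SimpleGraph.pathGraph n) L := by
  obtain ⟨hsymm, hneg, hzero, hrow⟩ := hL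
  refine ⟨hsymm, fun i j hij => ?_, fun i j hne hij => ?_, hrow⟩
  · rcases SimpleGraph.pathGraph_adj.1 hij with h | h
    · exact hneg i j h
    · exact hsymm.apply i j ▸ hneg j i h
  · rw [SimpleGraph.pathGraph_adj] at hij
    rcases lt_or_gt_of_ne hne with h | h
    · exact hzero i j (by lia)
    · exact hsymm.apply i j ▸ hzero j i (by lia)

theorem apply_eq_zero_of_add_two_le (hL : IsPathLaplacian L) {i j : Fin n}
    (hij : (i : ℕ) + 2 ≤ j ∨ (j : ℕ) + 2 ≤ i) : L i j = 0 := by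
  refine hL.isWeightedLaplacian.apply_eq_zero (by lia) ?_
  rw [SimpleGraph.pathGraph_adj]
  lia

theorem isUnit_det_submatrix_val (hL : IsPathLaplacian L) {p : Fin n → Prop} [DecidablePred p]
    {s : Fin n} (hs : ¬ p s) :
    IsUnit (L.submatrix (Subtype.val : {i // p i} → Fin n) Subtype.val).det :=
  (hL.isWeightedLaplacian.det_submatrix_ne_zero (SimpleGraph.pathGraph_preconnected n)
    Subtype.val_injective (by simpa using hs)).isUnit

end IsPathLaplacian

section ConsecutiveIntervals

variable {α : Type*} [LinearOrder α] {m : ℕ} {w : Fin (m + 1) → α} {x : α}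

theorem exists_castSucc_lt_and_lt_succ (h0 : w 0 < x) (hlast : x < w (Fin.last m))
    (hne : ∀ a, w a ≠ x) : ∃ a : Fin m, w a.castSucc < x ∧ x < w a.succ := by
  by_contra! hnone
  have hlt (a : Fin (m + 1)) : w a < x := by
    induction a using Fin.induction with
    | zero => exact h0
    | succ a ih => exact (hnone a ih).lt_of_ne (hne _)
  exact hlast.not_gt (hlt _)

theorem not_castSucc_lt_and_lt_succ (hw : Monotone w) (a : Fin m) (b : Fin (m + 1)) :
    ¬ (w a.castSucc < w b ∧ w b < w a.succ) := fun ⟨hlt, hgt⟩ =>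
  (Fin.castSucc_lt_iff_succ_le.1 (hw.reflect_lt hlt)).not_gt (hw.reflect_lt hgt)

end ConsecutiveIntervals

/-- The node labels `0, ℓ 0 + 1, …, ℓ k + 1, n + 1` bounding the segments: the 1-based labels of
the leaders, between the two virtual labels `0` and `n + 1`. -/
def boundary {n k : ℕ} (ℓ : Fin (k + 1) → Fin n) : Fin (k + 3) → ℕ :=
  Fin.cons 0 (Fin.snoc (fun t => (ℓ t : ℕ) + 1) (n + 1))

section Segments

variable {n k : ℕ} {ℓ : Fin (k + 1) → Fin n}

theorem boundary_zero : boundary ℓ 0 = 0 := rfl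

theorem boundary_succ_castSucc (t : Fin (k + 1)) : boundary ℓ t.castSucc.succ = ℓ t + 1 := by
  rw [boundary, Fin.cons_succ, Fin.snoc_castSucc]

-- The next four are `boundary_succ_castSucc` in the index forms produced by `Fin.sum_univ_succ` and
-- `Fin.sum_univ_castSucc`.
theorem boundary_succ_zero : boundary ℓ (Fin.succ 0) = ℓ 0 + 1 :=
  boundary_succ_castSucc 0

theorem boundary_castSucc_succ_castSucc (i : Fin k) :
    boundary ℓ i.castSucc.succ.castSucc = ℓ i.castSucc + 1 :=
  boundary_succ_castSucc i.castSucc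

theorem boundary_succ_succ_castSucc (i : Fin k) :
    boundary ℓ i.castSucc.succ.succ = ℓ i.succ + 1 :=
  boundary_succ_castSucc i.succ

theorem boundary_castSucc_last :
    boundary ℓ (Fin.last (k + 1)).castSucc = ℓ (Fin.last k) + 1 :=
  boundary_succ_castSucc (Fin.last k)

theorem boundary_last : boundary ℓ (Fin.last (k + 2)) = n + 1 := by
  rw [boundary, ← Fin.succ_last, Fin.cons_succ, Fin.snoc_last]

theorem forall_segments_iff (P : ℕ → ℕ → Prop) :
    (∀ a : Fin (k + 2), P (boundary ℓ a.castSucc) (boundary ℓ a.succ)) ↔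
      P 0 (ℓ 0 + 1) ∧ (∀ i : Fin k, P (ℓ i.castSucc + 1) (ℓ i.succ + 1)) ∧
        P (ℓ (Fin.last k) + 1) (n + 1) := by
  rw [Fin.forall_fin_succ, Fin.forall_fin_succ']
  simp only [Fin.castSucc_zero, boundary_zero, boundary_succ_zero,
    boundary_castSucc_succ_castSucc, boundary_succ_succ_castSucc, Fin.succ_last,
    boundary_castSucc_last, boundary_last]

theorem sum_segments {M : Type*} [AddCommMonoid M] (F : ℕ → ℕ → M) :
    ∑ a : Fin (k + 2), F (boundary ℓ a.castSucc) (boundary ℓ a.succ) =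
      F 0 (ℓ 0 + 1) + ∑ i : Fin k, F (ℓ i.castSucc + 1) (ℓ i.succ + 1) +
        F (ℓ (Fin.last k) + 1) (n + 1) := by
  rw [Fin.sum_univ_succ, Fin.sum_univ_castSucc, ← add_assoc]
  simp only [Fin.castSucc_zero, boundary_zero, boundary_succ_zero,
    boundary_castSucc_succ_castSucc, boundary_succ_succ_castSucc, Fin.succ_last,
    boundary_castSucc_last, boundary_last]

theorem monotone_boundary (hℓ : Monotone ℓ) : Monotone (boundary ℓ) := by
  refine Fin.monotone_iff_le_succ.2 fun i => ?_
  induction i using Fin.cases with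
  | zero => exact Nat.zero_le _
  | succ t =>
    rw [← Fin.succ_castSucc, boundary_succ_castSucc]
    induction t using Fin.lastCases with
    | last =>
      rw [Fin.succ_last, Fin.succ_last, boundary_last]
      lia
    | cast t =>
      rw [Fin.succ_castSucc, boundary_succ_castSucc]
      have hstep : ℓ t.castSucc ≤ ℓ t.succ := hℓ Fin.castSucc_lt_succ.le
      lia

/-- The indices of the nodes lying strictly between two consecutive boundary labels; these index
`pseg L (boundary ℓ a.castSucc) (boundary ℓ a.succ)`. -/
abbrev Segment (ℓ : Fin (k + 1) → Fin n) (a : Fin (k + 2)) : Type :=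
  {j : Fin n // boundary ℓ a.castSucc < (j : ℕ) + 1 ∧ (j : ℕ) + 1 < boundary ℓ a.succ}

theorem leader_notMem_segment (hℓ : Monotone ℓ) (a : Fin (k + 2)) (t : Fin (k + 1)) :
    ¬ (boundary ℓ a.castSucc < (ℓ t : ℕ) + 1 ∧ (ℓ t : ℕ) + 1 < boundary ℓ a.succ) := by
  rw [← boundary_succ_castSucc]
  exact not_castSucc_lt_and_lt_succ (monotone_boundary hℓ) a _

theorem Segment.notMem_image (hℓ : Monotone ℓ) {a : Fin (k + 2)} (i : Segment ℓ a) :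
    i.val ∉ Finset.image ℓ Finset.univ := by
  obtain ⟨i, hi⟩ := i
  simp only [Finset.mem_image, Finset.mem_univ, true_and]
  rintro ⟨t, rfl⟩
  exact leader_notMem_segment hℓ a t hi

theorem exists_segment {i : Fin n} (hi : i ∉ Finset.image ℓ Finset.univ) :
    ∃ a : Fin (k + 2),
      boundary ℓ a.castSucc < (i : ℕ) + 1 ∧ (i : ℕ) + 1 < boundary ℓ a.succ := by
  have hlast : (i : ℕ) + 1 < boundary ℓ (Fin.last _) := by rw [boundary_last]; lia
  refine exists_castSucc_lt_and_lt_succ (Nat.succ_pos _) hlast fun a => ?_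
  induction a using Fin.cases with
  | zero => exact (Nat.succ_ne_zero _).symm
  | succ t =>
    induction t using Fin.lastCases with
    | last =>
      rw [Fin.succ_last, boundary_last]
      lia
    | cast t =>
      rw [boundary_succ_castSucc]
      exact fun h => hi (Finset.mem_image.2 ⟨t, Finset.mem_univ t, Fin.ext (Nat.succ.inj h)⟩)

theorem Segment.add_two_le (hℓ : Monotone ℓ) {a b : Fin (k + 2)} (hab : a < b)
    (i : Segment ℓ a) (j : Segment ℓ b) : (i.val : ℕ) + 2 ≤ j.val := by
  have hle : boundary ℓ a.succ ≤ boundary ℓ b.castSucc :=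
    monotone_boundary hℓ (Fin.succ_le_castSucc_iff.2 hab)
  have hi := i.2.2
  have hj := j.2.1
  lia

/-- The partition of the non-leaders into segments; reindexing `L_ff` along it makes the matrix
block diagonal. -/
noncomputable def segmentEquiv (hℓ : Monotone ℓ) :
    (Σ a, Segment ℓ a) ≃ {i : Fin n // i ∉ Finset.image ℓ Finset.univ} :=
  Equiv.ofBijective (fun s => ⟨s.2.val, s.2.notMem_image hℓ⟩) <| by
    refine ⟨?_, fun ⟨i, hi⟩ => ?_⟩
    · rintro ⟨a, i⟩ ⟨b, j⟩ hij
      have hval : i.val = j.val := congrArg Subtype.val hij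
      rcases lt_trichotomy a b with hab | rfl | hab
      · have hgap := Segment.add_two_le hℓ hab i j
        lia
      · rw [Subtype.ext hval]
      · have hgap := Segment.add_two_le hℓ hab j i
        lia
    · obtain ⟨a, ha⟩ := exists_segment hi
      exact ⟨⟨a, i, ha⟩, rfl⟩

end Segments

theorem trace_inv_grounded_of_tridiagonal {n k : ℕ} {A : Matrix (Fin n) (Fin n) ℝ}
    (hA : ∀ ⦃i j : Fin n⦄, (i : ℕ) + 2 ≤ j ∨ (j : ℕ) + 2 ≤ i → A i j = 0)
    {ℓ : Fin (k + 1) → Fin n} (hℓ : Monotone ℓ)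
    (hunit : ∀ a : Fin (k + 2), IsUnit (pseg A (boundary ℓ a.castSucc) (boundary ℓ a.succ)).det) :
    (grounded A (Finset.image ℓ Finset.univ))⁻¹.trace =
      ∑ a : Fin (k + 2), (pseg A (boundary ℓ a.castSucc) (boundary ℓ a.succ))⁻¹.trace := by
  refine trace_inv_eq_sum_trace_inv_of_blocks _ (segmentEquiv hℓ) (fun a b hab i j => ?_) hunit
  exact hA (hab.lt_or_gt.imp (fun h => i.add_two_le hℓ h j) fun h => j.add_two_le hℓ h i)

/-- for a weighted path Laplacian and a nonempty leader set
`S = {ℓ₀ < ℓ₁ < ⋯ < ℓ_k}` (so `k + 1 ≥ 1` leaders), the grounded Laplacian and all segment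
submatrices are invertible and `(1/2)·tr(L_ff⁻¹)` splits as the sum of the segment
contributions. -/
theorem path_coherence_decomposition {n k : ℕ} (hn : 1 ≤ n)
    (L : Matrix (Fin n) (Fin n) ℝ) (hL : IsPathLaplacian L)
    (ℓ : Fin (k + 1) → Fin n) (hmono : StrictMono ℓ) :
    IsUnit (grounded L (Finset.image ℓ Finset.univ)).det ∧
    IsUnit (pseg L 0 ((ℓ 0 : ℕ) + 1)).det ∧
    (∀ i : Fin k, IsUnit (pseg L ((ℓ i.castSucc : ℕ) + 1) ((ℓ i.succ : ℕ) + 1)).det) ∧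
    IsUnit (pseg L ((ℓ (Fin.last k) : ℕ) + 1) (n + 1)).det ∧
    (1 / 2) * ((grounded L (Finset.image ℓ Finset.univ))⁻¹).trace =
      (1 / 2) * ((pseg L 0 ((ℓ 0 : ℕ) + 1))⁻¹).trace
      + (1 / 2) * ∑ i : Fin k,
          ((pseg L ((ℓ i.castSucc : ℕ) + 1) ((ℓ i.succ : ℕ) + 1))⁻¹).trace
      + (1 / 2) * ((pseg L ((ℓ (Fin.last k) : ℕ) + 1) (n + 1))⁻¹).trace := by
  have hunit (a : Fin (k + 2)) : IsUnit (pseg L (boundary ℓ a.castSucc) (boundary ℓ a.succ)).det :=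
    hL.isUnit_det_submatrix_val (leader_notMem_segment hmono.monotone a 0)
  obtain ⟨hfirst, hmiddle, hlast⟩ :=
    (forall_segments_iff fun a b => IsUnit (pseg L a b).det).1 hunit
  have hgrounded : IsUnit (grounded L (Finset.image ℓ Finset.univ)).det :=
    hL.isUnit_det_submatrix_val (s := ℓ 0) (by simp)
  have htrace := trace_inv_grounded_of_tridiagonal
    (fun _ _ => hL.apply_eq_zero_of_add_two_le) hmono.monotone hunit
  refine ⟨hgrounded, hfirst, hmiddle, hlast, ?_⟩
  rw [htrace, sum_segments fun a b => (pseg L a b)⁻¹.trace]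
  ring
end

section
/- Let n ≥ 1, let L be a weighted Laplacian of a path graph on n vertices, and let 1 ≤ k ≤ n. Then the minimum over all nonempty subsets S ⊆ {1,…,n} with |S| ≤ k of (1/2)·tr(L_ff⁻¹) equals the minimum over all j ∈ {1,…,k} and all increasing sequences 1 ≤ ℓ₁ < ℓ₂ < ⋯ < ℓ_j ≤ n of the quantity (1/2)·[tr(L_{(0→ℓ₁)}⁻¹) + Σ_{i=1}^{j−1} tr(L_{(ℓ_i→ℓ_{i+1})}⁻¹) + tr(L_{(ℓ_j→n+1)}⁻¹)]. -/
open Matrix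

/-!
Deleting a leader `c` from a path disconnects the followers below `c` from those above `c`, so the
grounded Laplacian is block diagonal and the trace of its inverse is the sum of the traces of the
inverses of the two blocks. Peeling off the leaders from the largest to the smallest leaves one
block per segment. The blocks can be inverted separately because each of them is nonsingular: by
`v ⬝ᵥ L *ᵥ v = -½ ∑ᵢ ∑ⱼ Lᵢⱼ (vᵢ - vⱼ)²`, a vector annihilated by a proper principal submatrix of `L`
extends by zero to a vector that is constant along the edges of a connected graph, hence zero.
-/

section DirichletForm

variable {V R : Type*} [Fintype V] {A : Matrix V V R}

theorem two_mul_dotProduct_mulVec_of_isSymm [CommRing R] (hA : A.IsSymm) (v : V → R) :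
    2 * (v ⬝ᵥ A *ᵥ v) =
      2 * ∑ i, (∑ j, A i j) * v i ^ 2 - ∑ i, ∑ j, A i j * (v i - v j) ^ 2 := by
  have hswap : ∑ i, ∑ j, A i j * v j ^ 2 = ∑ i, ∑ j, A i j * v i ^ 2 := by
    rw [Finset.sum_comm]
    simp only [hA.apply]
  have hexpand (i j : V) : A i j * (v i - v j) ^ 2 =
      A i j * v i ^ 2 + A i j * v j ^ 2 - 2 * (v i * (A i j * v j)) := by ring
  simp only [dotProduct, mulVec, hexpand, Finset.sum_sub_distrib, Finset.sum_add_distrib, hswap,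
    Finset.sum_mul, ← Finset.mul_sum]
  ring

theorem apply_eq_of_dotProduct_mulVec_nonpos [CommRing R] [LinearOrder R] [IsStrictOrderedRing R]
    (hA : A.IsSymm) (hoff : ∀ i j, i ≠ j → A i j ≤ 0) (hrow : ∀ i, 0 ≤ ∑ j, A i j)
    {v : V → R} (hv : v ⬝ᵥ A *ᵥ v ≤ 0) {i j : V} (hij : A i j ≠ 0) : v i = v j := by
  have hterm (i j : V) : A i j * (v i - v j) ^ 2 ≤ 0 := by
    obtain rfl | hne := eq_or_ne i j
    · simp
    · exact mul_nonpos_of_nonpos_of_nonneg (hoff i j hne) (sq_nonneg _)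
  have hrows : 0 ≤ ∑ i, (∑ j, A i j) * v i ^ 2 :=
    Finset.sum_nonneg fun i _ ↦ mul_nonneg (hrow i) (sq_nonneg _)
  have hsum_nonpos (i : V) : ∑ j, A i j * (v i - v j) ^ 2 ≤ 0 :=
    Finset.sum_nonpos fun j _ ↦ hterm i j
  have hsum : ∑ i, ∑ j, A i j * (v i - v j) ^ 2 = 0 := by
    refine le_antisymm (Finset.sum_nonpos fun i _ ↦ hsum_nonpos i) ?_
    linarith [two_mul_dotProduct_mulVec_of_isSymm hA v]
  have hsum_i : ∑ j, A i j * (v i - v j) ^ 2 = 0 :=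
    (Finset.sum_eq_zero_iff_of_nonpos fun i _ ↦ hsum_nonpos i).1 hsum i (Finset.mem_univ i)
  have hij_zero : A i j * (v i - v j) ^ 2 = 0 :=
    (Finset.sum_eq_zero_iff_of_nonpos fun j _ ↦ hterm i j).1 hsum_i j (Finset.mem_univ j)
  exact sub_eq_zero.1 (pow_eq_zero_iff two_ne_zero |>.1 ((mul_eq_zero.1 hij_zero).resolve_left hij))

theorem mulVec_extend_zero [NonUnitalNonAssocSemiring R] {m : Type*} [Fintype m] {f : m → V}
    (hf : f.Injective) (A : Matrix V V R) (x : m → R) :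
    A *ᵥ Function.extend f x 0 = A.submatrix id f *ᵥ x := by
  funext i
  refine (Fintype.sum_of_injective f hf _ _ (fun j hj ↦ ?_) fun j ↦ ?_).symm
  · simp [Function.extend_apply' _ _ _ hj]
  · simp [hf.extend_apply]

theorem det_toSquareBlockProp_ne_zero [DecidableEq V] [CommRing R] [LinearOrder R]
    [IsStrictOrderedRing R] (hA : A.IsSymm) (hoff : ∀ i j, i ≠ j → A i j ≤ 0)
    (hrow : ∀ i, 0 ≤ ∑ j, A i j) {G : SimpleGraph V} (hG : G.Preconnected)
    (hadj : ∀ i j, G.Adj i j → A i j ≠ 0) {p : V → Prop} [DecidablePred p] {c : V} (hc : ¬ p c) :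
    (A.toSquareBlockProp p).det ≠ 0 := by
  intro hdet
  obtain ⟨x, hx, hAx⟩ := exists_mulVec_eq_zero_iff.2 hdet
  set v : V → R := Function.extend Subtype.val x 0
  have hvx (y : {i // p i}) : v y = x y := Subtype.val_injective.extend_apply x 0 y
  have hv_zero {i : V} (hi : ¬ p i) : v i = 0 := Function.extend_apply' _ _ _ (by simpa using hi)
  have hform : v ⬝ᵥ A *ᵥ v = 0 := by
    refine Finset.sum_eq_zero fun i _ ↦ ?_
    by_cases hi : p i
    · have hAv : (A *ᵥ v) i = 0 := by
        rw [mulVec_extend_zero Subtype.val_injective]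
        exact congrFun hAx ⟨i, hi⟩
      rw [hAv, mul_zero]
    · rw [hv_zero hi, zero_mul]
  have hconst (i j : V) : v i = v j := by
    obtain ⟨w⟩ := hG i j
    induction w with
    | nil => rfl
    | cons h _ ih =>
      exact (apply_eq_of_dotProduct_mulVec_nonpos hA hoff hrow hform.le (hadj _ _ h)).trans ih
  exact hx (funext fun y ↦ by rw [← hvx, hconst y c, hv_zero hc, Pi.zero_apply])

end DirichletForm

section BlockInverse

variable {ι R : Type*} [Fintype ι] [DecidableEq ι] [CommRing R] {A : Matrix ι ι R}

theorem trace_submatrix_equiv {m n R : Type*} [Fintype m] [Fintype n] [AddCommMonoid R]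
    (e : m ≃ n) (A : Matrix n n R) : (A.submatrix e e).trace = A.trace :=
  e.sum_comp fun i ↦ A i i

theorem trace_inv_toSquareBlockProp_eq_add {p q r : ι → Prop} [DecidablePred p] [DecidablePred q]
    [DecidablePred r] (hp : ∀ i, p i ↔ q i ∨ r i) (hqr : ∀ i, q i → ¬ r i)
    (hA : ∀ i j, q i → r j → A i j = 0 ∧ A j i = 0)
    (hunit : IsUnit (A.toSquareBlockProp q) ↔ IsUnit (A.toSquareBlockProp r)) :
    (A.toSquareBlockProp p)⁻¹.trace =
      (A.toSquareBlockProp q)⁻¹.trace + (A.toSquareBlockProp r)⁻¹.trace := by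
  let e : {i // p i} ≃ {i // q i} ⊕ {i // r i} := (Equiv.subtypeEquivRight hp).trans
    (subtypeOrEquiv q r (Pi.disjoint_iff.2 fun i ↦ by simpa [Prop.disjoint_iff] using hqr i))
  have hblock : (A.toSquareBlockProp p).submatrix e.symm e.symm =
      fromBlocks (A.toSquareBlockProp q) 0 0 (A.toSquareBlockProp r) := by
    ext (⟨i, hi⟩ | ⟨i, hi⟩) (⟨j, hj⟩ | ⟨j, hj⟩)
    · rfl
    · exact (hA i j hi hj).1
    · exact (hA j i hj hi).2
    · rfl
  rw [← trace_submatrix_equiv e.symm, ← inv_submatrix_equiv, hblock,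
    inv_fromBlocks_zero₂₁_of_isUnit_iff _ _ _ hunit]
  simp only [trace, Fintype.sum_sum_type, diag_apply, fromBlocks_apply₁₁, fromBlocks_apply₂₂]

end BlockInverse

/-- A matrix indexed by an ordered type is tridiagonal if its `(i, j)` and `(j, i)` entries vanish
whenever some index lies strictly between `i` and `j`; over `Fin n` this says that
`A i j = 0` for `|i - j| ≥ 2`. -/
def IsTridiagonal {ι R : Type*} [LT ι] [Zero R] (A : Matrix ι ι R) : Prop :=
  ∀ ⦃i c j⦄, i < c → c < j → A i j = 0 ∧ A j i = 0

theorem IsTridiagonal.trace_inv_eq_add {ι R : Type*} [Fintype ι] [LinearOrder ι]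
    [CommRing R] {A : Matrix ι ι R} (hA : IsTridiagonal A) {p q r : ι → Prop} [DecidablePred p]
    [DecidablePred q] [DecidablePred r] {c : ι} (hc : ¬ p c) (hq : ∀ i, q i ↔ p i ∧ i < c)
    (hr : ∀ i, r i ↔ p i ∧ c < i)
    (hunit : IsUnit (A.toSquareBlockProp q) ↔ IsUnit (A.toSquareBlockProp r)) :
    (A.toSquareBlockProp p)⁻¹.trace =
      (A.toSquareBlockProp q)⁻¹.trace + (A.toSquareBlockProp r)⁻¹.trace := by
  refine trace_inv_toSquareBlockProp_eq_add (fun i ↦ ?_) (fun i hi hi' ↦ ?_)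
    (fun i j hi hj ↦ hA ((hq i).1 hi).2 ((hr j).1 hj).2) hunit
  · have hne (hi : p i) : i ≠ c := fun h ↦ hc (h ▸ hi)
    rw [hq, hr, ← and_or_left, lt_or_lt_iff_ne, and_iff_left_of_imp hne]
  · exact lt_asymm ((hq i).1 hi).2 ((hr i).1 hi').2

section Segments

variable {n : ℕ} {R : Type*} [CommRing R]

/-- The trace of the inverse of the principal submatrix of `A` on the 1-based nodes strictly
between `a` and `b`, that is, `tr(A_{(a→b)}⁻¹)`. -/
noncomputable def segmentTrace (A : Matrix (Fin n) (Fin n) R) (a b : ℕ) : R :=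
  (A.toSquareBlockProp fun i ↦ a < (i : ℕ) + 1 ∧ (i : ℕ) + 1 < b)⁻¹.trace

/-- The sum of `tr(A_{(a→b)}⁻¹)` over the segments into which the leaders `ℓ 0 < ⋯ < ℓ j` cut the
1-based nodes below `b`. -/
noncomputable def segmentTraceSum (A : Matrix (Fin n) (Fin n) R) {j : ℕ} (ℓ : Fin (j + 1) → Fin n)
    (b : ℕ) : R :=
  segmentTrace A 0 ((ℓ 0 : ℕ) + 1)
    + ∑ i : Fin j, segmentTrace A ((ℓ i.castSucc : ℕ) + 1) ((ℓ i.succ : ℕ) + 1)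
    + segmentTrace A ((ℓ (Fin.last j) : ℕ) + 1) b

theorem segmentTraceSum_succ (A : Matrix (Fin n) (Fin n) R) {j : ℕ} (ℓ : Fin (j + 2) → Fin n)
    (b : ℕ) :
    segmentTraceSum A ℓ b =
      segmentTraceSum A (ℓ ∘ Fin.castSucc) ((ℓ (Fin.last (j + 1)) : ℕ) + 1)
        + segmentTrace A ((ℓ (Fin.last (j + 1)) : ℕ) + 1) b := by
  simp only [segmentTraceSum, Fin.sum_univ_castSucc, Function.comp_apply, Fin.castSucc_zero,
    Fin.succ_castSucc, Fin.succ_last, add_assoc]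

variable {A : Matrix (Fin n) (Fin n) R}

theorem isUnit_toSquareBlockProp_of_not
    (hunit : ∀ S : Finset (Fin n), S.Nonempty → IsUnit (A.toSquareBlockProp (· ∉ S)))
    {p : Fin n → Prop} [DecidablePred p] {c : Fin n} (hc : ¬ p c) :
    IsUnit (A.toSquareBlockProp p) := by
  let e : {i // p i} ≃ {i // i ∉ Finset.univ.filter (¬ p ·)} :=
    Equiv.subtypeEquivRight fun i ↦ by simp
  exact (isUnit_submatrix_equiv e e).2 (hunit _ ⟨c, by simpa using hc⟩)

theorem IsTridiagonal.trace_inv_eq_add_segmentTrace_last (hA : IsTridiagonal A)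
    (hunit : ∀ S : Finset (Fin n), S.Nonempty → IsUnit (A.toSquareBlockProp (· ∉ S)))
    {j : ℕ} {ℓ : Fin (j + 1) → Fin n} (hℓ : StrictMono ℓ) {b : ℕ} {p q : Fin n → Prop}
    [DecidablePred p] [DecidablePred q] (hp : ∀ i, p i ↔ i ∉ Set.range ℓ ∧ (i : ℕ) + 1 < b)
    (hq : ∀ i, q i ↔ p i ∧ i < ℓ (Fin.last j)) :
    (A.toSquareBlockProp p)⁻¹.trace =
      (A.toSquareBlockProp q)⁻¹.trace + segmentTrace A ((ℓ (Fin.last j) : ℕ) + 1) b := by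
  set c := ℓ (Fin.last j)
  have hnotMem {i : Fin n} (hi : c < i) : i ∉ Set.range ℓ := by
    rintro ⟨m, rfl⟩
    exact hi.not_ge (hℓ.monotone (Fin.le_last m))
  refine hA.trace_inv_eq_add (c := c) (by simp [hp, c]) hq (fun i ↦ ?_) (iff_of_true ?_ ?_)
  · rw [hp, add_lt_add_iff_right, ← Fin.lt_def]
    exact ⟨fun h ↦ ⟨⟨hnotMem h.1, h.2⟩, h.1⟩, fun h ↦ ⟨h.2, h.1.2⟩⟩
  · exact isUnit_toSquareBlockProp_of_not hunit (c := c) (by simp [hq])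
  · exact isUnit_toSquareBlockProp_of_not hunit (c := c) (by simp)

theorem IsTridiagonal.trace_inv_eq_segmentTraceSum (hA : IsTridiagonal A)
    (hunit : ∀ S : Finset (Fin n), S.Nonempty → IsUnit (A.toSquareBlockProp (· ∉ S)))
    {j : ℕ} {ℓ : Fin (j + 1) → Fin n} (hℓ : StrictMono ℓ) {b : ℕ} (hb : (ℓ (Fin.last j) : ℕ) < b)
    {p : Fin n → Prop} [DecidablePred p]
    (hp : ∀ i, p i ↔ i ∉ Set.range ℓ ∧ (i : ℕ) + 1 < b) :
    (A.toSquareBlockProp p)⁻¹.trace = segmentTraceSum A ℓ b := by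
  induction j generalizing b p with
  | zero =>
    have hsum : segmentTraceSum A ℓ b =
        segmentTrace A 0 ((ℓ 0 : ℕ) + 1) + segmentTrace A ((ℓ 0 : ℕ) + 1) b := by
      simp [segmentTraceSum]
    rw [Fin.last_zero] at hb
    rw [hsum]
    refine hA.trace_inv_eq_add_segmentTrace_last hunit hℓ hp fun i ↦ ?_
    simp only [hp, Set.mem_range, Nat.reduceAdd, Fin.exists_fin_one, Fin.last_zero, Fin.lt_def,
      Fin.ext_iff]
    lia
  | succ j ih =>
    have hlt : ℓ (Fin.last j).castSucc < ℓ (Fin.last (j + 1)) := hℓ (Fin.castSucc_lt_last _)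
    rw [segmentTraceSum_succ, hA.trace_inv_eq_add_segmentTrace_last hunit hℓ hp fun i ↦ Iff.rfl,
      ih (hℓ.comp Fin.strictMono_castSucc) (Nat.lt_succ_of_lt hlt) fun i ↦ ?_]
    simp only [hp, Set.mem_range, Fin.exists_fin_succ', Function.comp_apply, Fin.lt_def,
      Fin.ext_iff]
    lia

end Segments

section PathLaplacian

variable {n : ℕ} {L : Matrix (Fin n) (Fin n) ℝ}

theorem IsPathLaplacian.isTridiagonal (hL : IsPathLaplacian L) : IsTridiagonal L := by
  intro i c j hic hcj
  have hij : L i j = 0 := hL.2.2.1 i j (by lia)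
  exact ⟨hij, (hL.1.apply i j).trans hij⟩

theorem IsPathLaplacian.apply_ne_zero_of_adj (hL : IsPathLaplacian L) {i j : Fin n}
    (hij : (SimpleGraph.pathGraph n).Adj i j) : L i j ≠ 0 := by
  rcases SimpleGraph.pathGraph_adj.1 hij with h | h
  · exact (hL.2.1 i j h).ne
  · exact (hL.1.apply j i ▸ hL.2.1 j i h).ne

theorem IsPathLaplacian.apply_nonpos_of_ne (hL : IsPathLaplacian L) {i j : Fin n} (hij : i ≠ j) :
    L i j ≤ 0 := by
  wlog hlt : i < j generalizing i j
  · exact hL.1.apply i j ▸ this hij.symm (hij.symm.lt_of_le (not_lt.1 hlt))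
  obtain h | h := (Nat.succ_le_of_lt hlt).eq_or_lt
  · exact (hL.2.1 i j h).le
  · exact (hL.2.2.1 i j h).le

theorem IsPathLaplacian.isUnit_grounded (hL : IsPathLaplacian L) {S : Finset (Fin n)}
    (hS : S.Nonempty) : IsUnit (grounded L S) := by
  obtain ⟨c, hc⟩ := hS
  refine (isUnit_iff_isUnit_det _).2 (isUnit_iff_ne_zero.2 ?_)
  exact det_toSquareBlockProp_ne_zero hL.1 (fun _ _ ↦ hL.apply_nonpos_of_ne)
    (fun i ↦ (hL.2.2.2 i).ge) (SimpleGraph.pathGraph_preconnected n)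
    (fun _ _ ↦ hL.apply_ne_zero_of_adj) (not_not.2 hc)

end PathLaplacian

theorem path_coherence_leader_selection_general {n : ℕ} {R : Type*} [CommRing R]
    {A : Matrix (Fin n) (Fin n) R} (hA : IsTridiagonal A)
    (hunit : ∀ S : Finset (Fin n), S.Nonempty → IsUnit (A.toSquareBlockProp (· ∉ S)))
    (k : ℕ) (a : R) :
    { x : R | ∃ S : Finset (Fin n), S.Nonempty ∧ S.card ≤ k ∧
        x = a * (A.toSquareBlockProp (· ∉ S))⁻¹.trace } =
    { x : R | ∃ j : ℕ, j + 1 ≤ k ∧ ∃ ℓ : Fin (j + 1) → Fin n, StrictMono ℓ ∧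
        x = a * segmentTraceSum A ℓ (n + 1) } := by
  have htrace {j : ℕ} {ℓ : Fin (j + 1) → Fin n} (hℓ : StrictMono ℓ) {S : Finset (Fin n)}
      (hS : S = Set.range ℓ) :
      (A.toSquareBlockProp (· ∉ S))⁻¹.trace = segmentTraceSum A ℓ (n + 1) :=
    hA.trace_inv_eq_segmentTraceSum hunit hℓ (by lia) fun i ↦ by simp [← hS]
  ext x
  constructor
  · rintro ⟨S, hS, hcard, rfl⟩
    obtain ⟨j, hj⟩ := Nat.exists_eq_add_of_lt hS.card_pos
    rw [zero_add] at hj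
    have hmono := (S.orderEmbOfFin hj).strictMono
    exact ⟨j, hj ▸ hcard, _, hmono, by rw [htrace hmono (S.range_orderEmbOfFin hj).symm]⟩
  · rintro ⟨j, hj, ℓ, hℓ, rfl⟩
    refine ⟨Finset.univ.image ℓ, by simp, ?_, by rw [htrace hℓ (by simp)]⟩
    simpa [Finset.card_image_of_injective _ hℓ.injective] using hj

/-- for a weighted path Laplacian and `1 ≤ k ≤ n`, the minimum of
`(1/2)·tr(L_ff⁻¹)` over all nonempty leader sets `S` with `|S| ≤ k` equals the minimum
over all `j ∈ {1,…,k}` (written `j'+1` with `j'+1 ≤ k`) and all increasing sequences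
`ℓ₀ < ⋯ < ℓ_{j'}` of the segment-sum formula. -/
theorem path_coherence_leader_selection {n k : ℕ} (hn : 1 ≤ n) (hk1 : 1 ≤ k) (hkn : k ≤ n)
    (L : Matrix (Fin n) (Fin n) ℝ) (hL : IsPathLaplacian L) :
    sInf { x : ℝ | ∃ S : Finset (Fin n), S.Nonempty ∧ S.card ≤ k ∧
        x = (1 / 2) * ((grounded L S)⁻¹).trace } =
    sInf { x : ℝ | ∃ j : ℕ, j + 1 ≤ k ∧ ∃ ℓ : Fin (j + 1) → Fin n, StrictMono ℓ ∧
        x = (1 / 2) * ( ((pseg L 0 ((ℓ 0 : ℕ) + 1))⁻¹).trace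
          + ∑ i : Fin j, ((pseg L ((ℓ i.castSucc : ℕ) + 1) ((ℓ i.succ : ℕ) + 1))⁻¹).trace
          + ((pseg L ((ℓ (Fin.last j) : ℕ) + 1) (n + 1))⁻¹).trace ) } :=
  congrArg sInf <| path_coherence_leader_selection_general hL.isTridiagonal
    (fun _ ↦ hL.isUnit_grounded) k (1 / 2)
end

section
/- Let V be a finite nonempty type, s ∈ V, and w : V → V → [0,∞] an extended-nonnegative-real edge-weight function. Define d : ℕ → V → [0,∞] by d(0)(v) = 0 if v = s and d(0)(v) = ∞ otherwise, and d(m+1)(v) = min over u ∈ V of (d(m)(u) + w(u,v)). Then for every H ∈ ℕ and every v ∈ V, the minimum over 0 ≤ m ≤ H of d(m)(v) equals the infimum over all walks from s to v having at most H edges of the walk's total weight. -/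
open scoped ENNReal

/-!
The `m`-th iterate of the recursion is the infimum of the weights of the walks with exactly `m`
edges: a walk with `m + 1` edges ending at `v` is a walk with `m` edges ending at some `u`, followed
by the edge from `u` to `v`, and adding `w u v` commutes with the infimum over the former. This
exchange only needs a truncated subtraction, since `a - b ≤ c ↔ a ≤ c + b` makes addition of `b`
an upper adjoint.
-/

section BellmanFord

variable {V M : Type*} [AddCommMonoid M]

/-- The total weight of the walk `p 0, p 1, …, p m` with `m` edges, under the edge weights `w`. A
walk with `m` edges is encoded by its `m + 1` vertices. -/
def walkWeight (w : V → V → M) {m : ℕ} (p : Fin (m + 1) → V) : M :=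
  ∑ i : Fin m, w (p i.castSucc) (p i.succ)

theorem walkWeight_zero (w : V → V → M) (p : Fin (0 + 1) → V) : walkWeight w p = 0 :=
  Fin.sum_univ_zero _

theorem walkWeight_snoc (w : V → V → M) {m : ℕ} (p : Fin (m + 1) → V) (v : V) :
    walkWeight w (Fin.snoc p v : Fin (m + 1 + 1) → V) = walkWeight w p + w (p (Fin.last m)) v := by
  simp only [walkWeight, Fin.sum_univ_castSucc, Fin.succ_last, Fin.succ_castSucc, Fin.snoc_castSucc,
    Fin.snoc_last]

variable [CompleteLattice M]

/-- The infimum of the weights of the walks from `s` to `v` with exactly `m` edges; it is `⊤` if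
there is no such walk. -/
def infWalkWeight (w : V → V → M) (s : V) (m : ℕ) (v : V) : M :=
  ⨅ (p : Fin (m + 1) → V) (_ : p 0 = s) (_ : p (Fin.last m) = v), walkWeight w p

theorem le_infWalkWeight_iff {w : V → V → M} {s v : V} {m : ℕ} {c : M} :
    c ≤ infWalkWeight w s m v ↔
      ∀ p : Fin (m + 1) → V, p 0 = s → p (Fin.last m) = v → c ≤ walkWeight w p := by
  simp only [infWalkWeight, le_iInf_iff]

theorem infWalkWeight_zero [DecidableEq V] (w : V → V → M) (s v : V) :
    infWalkWeight w s 0 v = if v = s then 0 else ⊤ := by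
  refine eq_of_forall_le_iff fun c => ?_
  rw [le_infWalkWeight_iff]
  split_ifs with hvs
  · subst hvs
    simp only [walkWeight_zero]
    exact ⟨fun h => h (fun _ => v) rfl rfl, fun h _ _ _ => h⟩
  · exact iff_of_true (fun p hs hv => absurd (hv.symm.trans hs) hvs) le_top

theorem infWalkWeight_succ [Sub M] [OrderedSub M] (w : V → V → M) (s : V) (m : ℕ) (v : V) :
    infWalkWeight w s (m + 1) v = ⨅ u, infWalkWeight w s m u + w u v := by
  refine eq_of_forall_le_iff fun c => ?_
  simp only [le_iInf_iff, ← tsub_le_iff_right, le_infWalkWeight_iff]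
  constructor
  · rintro h _ p hs rfl
    rw [tsub_le_iff_right, ← walkWeight_snoc]
    exact h (Fin.snoc p v) (by rwa [Fin.snoc_apply_zero]) (Fin.snoc_last _ _)
  · intro h q hs hv
    cases q using Fin.snocCases with | _ p x
    rw [Fin.snoc_apply_zero] at hs
    obtain rfl : x = v := by rwa [Fin.snoc_last] at hv
    rw [walkWeight_snoc, ← tsub_le_iff_right]
    exact h _ p hs rfl

theorem eq_infWalkWeight_of_recurrence [DecidableEq V] [Sub M] [OrderedSub M] {s : V}
    {w : V → V → M} {d : ℕ → V → M} (h0 : ∀ v, d 0 v = if v = s then 0 else ⊤)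
    (hstep : ∀ m v, d (m + 1) v = ⨅ u, (d m u + w u v)) (m : ℕ) (v : V) :
    d m v = infWalkWeight w s m v := by
  induction m generalizing v with
  | zero => rw [h0, infWalkWeight_zero]
  | succ m ih => simp only [hstep, ih, infWalkWeight_succ]

theorem iInf_infWalkWeight_eq_sInf (w : V → V → M) (s : V) (H : ℕ) (v : V) :
    (⨅ m ∈ Finset.range (H + 1), infWalkWeight w s m v) =
      sInf {x : M | ∃ m : ℕ, m ≤ H ∧ ∃ p : Fin (m + 1) → V,
        p 0 = s ∧ p (Fin.last m) = v ∧ x = walkWeight w p} := by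
  refine eq_of_forall_le_iff fun c => ?_
  simp only [le_iInf_iff, le_infWalkWeight_iff, Finset.mem_range_succ_iff, le_sInf_iff]
  constructor
  · rintro h _ ⟨m, hm, p, hs, hv, rfl⟩
    exact h m hm p hs hv
  · intro h m hm p hs hv
    exact h _ ⟨m, hm, p, hs, hv, rfl⟩

theorem bellmanFord_bounded_correct_general [DecidableEq V] [Sub M] [OrderedSub M]
    (s : V) (w : V → V → M) (d : ℕ → V → M)
    (h0 : ∀ v : V, d 0 v = if v = s then 0 else ⊤)
    (hstep : ∀ (m : ℕ) (v : V), d (m + 1) v = ⨅ u : V, (d m u + w u v)) :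
    ∀ (H : ℕ) (v : V),
      (⨅ m ∈ Finset.range (H + 1), d m v) =
        sInf {x : M | ∃ m : ℕ, m ≤ H ∧ ∃ p : Fin (m + 1) → V,
          p 0 = s ∧ p (Fin.last m) = v ∧
          x = ∑ i : Fin m, w (p i.castSucc) (p i.succ)} := by
  intro H v
  simp only [eq_infWalkWeight_of_recurrence h0 hstep]
  exact iInf_infWalkWeight_eq_sInf w s H v

end BellmanFord

/-- correctness of the modified Bellman–Ford algorithm for minimum-weight
walks with at most `H` edges. With `d 0 v = 0` if `v = s` and `∞` otherwise, and
`d (m+1) v = min_u (d m u + w u v)`, the minimum of `d m v` over `0 ≤ m ≤ H` equals the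
infimum of the total weight over all walks from `s` to `v` with at most `H` edges. -/
theorem bellmanFord_bounded_correct {V : Type*} [Fintype V] [DecidableEq V] [Nonempty V]
    (s : V) (w : V → V → ℝ≥0∞) (d : ℕ → V → ℝ≥0∞)
    (h0 : ∀ v : V, d 0 v = if v = s then 0 else ∞)
    (hstep : ∀ (m : ℕ) (v : V), d (m + 1) v = ⨅ u : V, (d m u + w u v)) :
    ∀ (H : ℕ) (v : V),
      (⨅ m ∈ Finset.range (H + 1), d m v) =
        sInf { x : ℝ≥0∞ | ∃ m : ℕ, m ≤ H ∧ ∃ p : Fin (m + 1) → V,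
          p 0 = s ∧ p (Fin.last m) = v ∧
          x = ∑ i : Fin m, w (p i.castSucc) (p i.succ) } :=
  bellmanFord_bounded_correct_general s w d h0 hstep
end

section
/- Let V be a finite nonempty type, s ∈ V, and w : V → V → [0,∞] an extended-nonnegative-real edge-weight function. Define d : ℕ → V → [0,∞] by d(0)(v) = ∞ if v = s and d(0)(v) = 0 otherwise, and d(m+1)(v) = max over u ∈ V of min(d(m)(u), w(u,v)). Then for every m ∈ ℕ and every v ∈ V, d(m)(v) equals the supremum over all walks p : {0,1,…,m} → V with p(0) = s and p(m) = v of the bottleneck weight min_{0 ≤ i ≤ m−1} w(p(i), p(i+1)), where the bottleneck weight of the length-0 walk is ∞. -/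
open scoped ENNReal

/-- A walk of `m` edges from `s` to `v` in the complete digraph on `V`, encoded as its sequence of
`m + 1` vertices. -/
abbrev Walk {V : Type*} (s v : V) (m : ℕ) : Type _ :=
  {p : Fin (m + 1) → V // p 0 = s ∧ p (Fin.last m) = v}

namespace Walk

variable {V L : Type*} {s u v : V} {m : ℕ}

/-- The walk `p` extended by one last edge, to `v`. -/
def snoc (p : Walk s u m) (v : V) : Walk s v (m + 1) :=
  ⟨Fin.snoc (α := fun _ => V) p.val v, (Fin.snoc_apply_zero _ _).trans p.property.1,
    Fin.snoc_last _ _⟩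

/-- The walk `q` with its last edge removed. -/
def init (q : Walk s v (m + 1)) : Walk s (q.val (Fin.last m).castSucc) m :=
  ⟨Fin.init q.val, q.property.1, rfl⟩

theorem snoc_init (q : Walk s v (m + 1)) : q.init.snoc v = q := by
  obtain ⟨q, rfl, rfl⟩ := q
  exact Subtype.ext (Fin.snoc_init_self q)

/-- The bottleneck weight of a walk, valued in a complete lattice; it is `⊤` for a walk without
edges. -/
def bottleneck [CompleteLattice L] (w : V → V → L) (p : Walk s v m) : L :=
  ⨅ i : Fin m, w (p.val i.castSucc) (p.val i.succ)

theorem bottleneck_snoc [CompleteLattice L] (w : V → V → L) (p : Walk s u m) (v : V) :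
    (p.snoc v).bottleneck w = p.bottleneck w ⊓ w u v := by
  refine eq_of_forall_le_iff fun a => ?_
  simp only [bottleneck, snoc, le_inf_iff, le_iInf_iff, Fin.forall_fin_succ', Fin.snoc_castSucc,
    Fin.succ_castSucc, Fin.succ_last, Fin.snoc_last, p.property.2]

end Walk

section Width

variable {V L : Type*}

/-- The `m`-edge width from `s` to `v`: the supremum of the bottleneck weights of the walks of
exactly `m` edges from `s` to `v`. -/
def width [CompleteLattice L] (w : V → V → L) (s : V) (m : ℕ) (v : V) : L :=
  ⨆ p : Walk s v m, p.bottleneck w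

theorem width_zero [CompleteLattice L] [DecidableEq V] (w : V → V → L) (s v : V) :
    width w s 0 v = if v = s then ⊤ else ⊥ := by
  split_ifs with h
  · subst h
    exact top_le_iff.mp <| le_iSup_of_le ⟨fun _ => v, rfl, rfl⟩ (iInf_of_empty _).ge
  · have : IsEmpty (Walk s v 0) := ⟨fun p => h (p.property.2.symm.trans p.property.1)⟩
    exact iSup_of_empty _

theorem width_succ [Order.Frame L] (w : V → V → L) (s : V) (m : ℕ) (v : V) :
    width w s (m + 1) v = ⨆ u, width w s m u ⊓ w u v := by
  have snoc_surjective : Function.Surjective fun p : Σ u, Walk s u m => p.2.snoc v :=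
    fun q => ⟨⟨_, q.init⟩, q.snoc_init⟩
  calc
    width w s (m + 1) v = ⨆ p : Σ u, Walk s u m, (p.2.snoc v).bottleneck w :=
      (snoc_surjective.iSup_comp fun q => q.bottleneck w).symm
    _ = ⨆ u, ⨆ p : Walk s u m, p.bottleneck w ⊓ w u v := by
      simp only [Walk.bottleneck_snoc, iSup_sigma]
    _ = ⨆ u, width w s m u ⊓ w u v := by
      simp only [width, iSup_inf_eq]

theorem bellmanFord_widest_correct_general [Order.Frame L] [DecidableEq V]
    (s : V) (w : V → V → L) (d : ℕ → V → L)
    (h0 : ∀ v, d 0 v = if v = s then ⊤ else ⊥)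
    (hstep : ∀ m v, d (m + 1) v = ⨆ u, d m u ⊓ w u v) (m : ℕ) (v : V) :
    d m v = width w s m v := by
  induction m generalizing v with
  | zero => rw [h0, width_zero]
  | succ m ih => simp only [hstep, width_succ, ih]

end Width

/-- correctness of the widest-path (max–min) Bellman–Ford dynamic program.
`d 0 v = ∞` if `v = s` and `0` otherwise; `d (m+1) v = max_u min (d m u) (w u v)`.
Then `d m v` is the supremum, over walks `p : Fin (m+1) → V` from `s` to `v`, of the
bottleneck weight `min_{i<m} w (p i) (p (i+1))` (which is `∞` for the length-0 walk). -/
theorem bellmanFord_widest_correct {V : Type*} [Fintype V] [DecidableEq V] [Nonempty V]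
    (s : V) (w : V → V → ℝ≥0∞) (d : ℕ → V → ℝ≥0∞)
    (h0 : ∀ v : V, d 0 v = if v = s then ∞ else 0)
    (hstep : ∀ (m : ℕ) (v : V), d (m + 1) v = ⨆ u : V, min (d m u) (w u v)) :
    ∀ (m : ℕ) (v : V),
      d m v = ⨆ p : {p : Fin (m + 1) → V // p 0 = s ∧ p (Fin.last m) = v},
        ⨅ i : Fin m, w (p.val i.castSucc) (p.val i.succ) :=
  bellmanFord_widest_correct_general s w d h0 hstep
end

section
/- Let L be a real symmetric n×n matrix with L_{ij} ≤ 0 for all i ≠ j and all row sums zero, such that the graph on the index set with an edge between i and j whenever L_{ij} < 0 is connected. Let S be a nonempty proper subset of the index set, let L_ff and L_fl be the corresponding blocks of L, and let λ = λ_min(L_ff) be the smallest eigenvalue of L_ff, so λ > 0. Let x̄ ∈ ℝ and let x_f : ℝ → ℝ^{complement of S} be differentiable with x_f′(t) = −L_ff·x_f(t) − L_fl·(x̄·𝟏) for all t. Then for all t ≥ 0, ‖x_f(t) − x̄·𝟏‖ ≤ exp(−λ·t)·‖x_f(0) − x̄·𝟏‖; in particular x_f(t) converges to x̄·𝟏 as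 t → ∞. -/
open Matrix

/-!
The error `e = x_f − x̄·𝟏` satisfies `e' = −L_ff e`, because the zero row sums make `x̄·𝟏` an
equilibrium. Hence `(‖e‖²)' = −2⟪e, L_ff e⟫ ≤ −2λ‖e‖²`, and Grönwall's inequality gives the decay.
For `λ > 0`, the row sums of `L_ff` are the total weights towards the leaders, and
`⟪v, L_ff v⟫` adds up these row sums times `v i ^ 2` and, over ordered pairs of followers, the
edge energies `−L i j * (v i − v j) ^ 2 / 2`. If the form vanishes, `v` is constant along edges and
zero next to a leader, so following a path to a leader shows `v = 0`.
-/

section QuadraticForm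

variable {m R : Type*} [Fintype m] [CommRing R] {M : Matrix m m R}

lemma two_mul_dotProduct_mulVec_self (hM : M.IsSymm) (v : m → R) :
    2 * (v ⬝ᵥ M *ᵥ v) =
      2 * ∑ i, (∑ j, M i j) * v i ^ 2 + ∑ i, ∑ j, -M i j * (v i - v j) ^ 2 := by
  have hswap : ∑ i, ∑ j, M i j * v j ^ 2 = ∑ i, ∑ j, M i j * v i ^ 2 := by
    rw [Finset.sum_comm]
    simp only [hM.apply]
  have hexpand : ∑ i, ∑ j, -M i j * (v i - v j) ^ 2 =
      2 * (v ⬝ᵥ M *ᵥ v) - ∑ i, ∑ j, M i j * v i ^ 2 - ∑ i, ∑ j, M i j * v j ^ 2 := by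
    simp only [dotProduct, mulVec, Finset.mul_sum, ← Finset.sum_sub_distrib]
    refine Finset.sum_congr rfl fun i _ ↦ Finset.sum_congr rfl fun j _ ↦ ?_
    ring
  simp only [hexpand, hswap, Finset.sum_mul]
  ring

lemma eq_zero_of_dotProduct_mulVec_self_nonpos [LinearOrder R] [IsStrictOrderedRing R]
    (hM : M.IsSymm) (hoff : ∀ i j, i ≠ j → M i j ≤ 0) (hrow : ∀ i, 0 ≤ ∑ j, M i j)
    (hreach : ∀ i, ∃ k, 0 < ∑ j, M k j ∧ Relation.ReflTransGen (fun a b ↦ M a b < 0) i k)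
    {v : m → R} (hv : v ⬝ᵥ M *ᵥ v ≤ 0) : v = 0 := by
  have hdiag i : 0 ≤ (∑ j, M i j) * v i ^ 2 := mul_nonneg (hrow i) (sq_nonneg _)
  have hedge i j : 0 ≤ -M i j * (v i - v j) ^ 2 := by
    obtain rfl | hij := eq_or_ne i j
    · simp
    · exact mul_nonneg (neg_nonneg.2 (hoff i j hij)) (sq_nonneg _)
  have hdiag_sum := Fintype.sum_nonneg hdiag
  have hedge_row i := Fintype.sum_nonneg (hedge i)
  have hedge_sum := Fintype.sum_nonneg hedge_row
  have hform := two_mul_dotProduct_mulVec_self hM v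
  have hdiag_eq i : (∑ j, M i j) * v i ^ 2 = 0 :=
    congrFun ((Fintype.sum_eq_zero_iff_of_nonneg hdiag).1 (by linarith)) i
  have hedge_eq i j : -M i j * (v i - v j) ^ 2 = 0 := by
    have hrow_eq := congrFun ((Fintype.sum_eq_zero_iff_of_nonneg hedge_row).1 (by linarith)) i
    exact congrFun ((Fintype.sum_eq_zero_iff_of_nonneg (hedge i)).1 hrow_eq) j
  funext i
  obtain ⟨k, hk, hik⟩ := hreach i
  induction hik using Relation.ReflTransGen.head_induction_on with
  | refl => simpa [hk.ne'] using hdiag_eq k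
  | @head a b hab _ ih =>
    have hsub : v a - v b = 0 := by simpa [hab.ne] using hedge_eq a b
    exact (sub_eq_zero.1 hsub).trans ih

end QuadraticForm

section GroundedMatrix

variable {ι : Type*} [Fintype ι] {S : Finset ι}

lemma sum_toBlock_notMem_add_sum_toBlock_mem [DecidableEq ι] {κ R : Type*} [AddCommMonoid R]
    (L : Matrix κ ι R) (S : Finset ι) {p : κ → Prop} (i : {i // p i}) :
    ∑ j, L.toBlock p (· ∉ S) i j + ∑ j, L.toBlock p (· ∈ S) i j = ∑ j, L i j := by
  rw [add_comm]
  convert Fintype.sum_subtype_add_sum_subtype (· ∈ S) (L i) <;> rfl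

lemma toBlock_mulVec_const_add_toBlock_mulVec_const [DecidableEq ι] {κ R : Type*}
    [NonUnitalNonAssocSemiring R] {L : Matrix κ ι R} {p : κ → Prop}
    (hrow : ∀ i, p i → ∑ j, L i j = 0) (c : R) :
    L.toBlock p (· ∉ S) *ᵥ (fun _ ↦ c) + L.toBlock p (· ∈ S) *ᵥ (fun _ ↦ c) = 0 := by
  funext i
  simp only [Pi.add_apply, mulVec, dotProduct, ← Finset.sum_mul, ← add_mul]
  rw [sum_toBlock_notMem_add_sum_toBlock_mem, hrow i i.2, zero_mul, Pi.zero_apply]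

lemma posDef_toBlock_compl {L : Matrix ι ι ℝ} (hsym : (L.toBlock (· ∉ S) (· ∉ S)).IsSymm)
    (hoff : ∀ i ∉ S, ∀ j, i ≠ j → L i j ≤ 0) (hrow : ∀ i ∉ S, ∑ j, L i j = 0)
    (hreach : ∀ i ∉ S, ∃ s ∈ S, Relation.ReflTransGen (fun j k ↦ L j k < 0) i s) :
    (L.toBlock (· ∉ S) (· ∉ S)).PosDef := by
  classical
  have hleader (i : {i // i ∉ S}) (s : {s // s ∈ S}) :
      0 ≤ -L.toBlock (· ∉ S) (· ∈ S) i s :=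
    neg_nonneg.2 (hoff i i.2 s fun h ↦ i.2 (h ▸ s.2))
  have hrow_eq (i : {i // i ∉ S}) : ∑ j, L.toBlock (· ∉ S) (· ∉ S) i j =
      ∑ s, -L.toBlock (· ∉ S) (· ∈ S) i s := by
    rw [Finset.sum_neg_distrib]
    exact eq_neg_of_add_eq_zero_left
      ((sum_toBlock_notMem_add_sum_toBlock_mem L S i).trans (hrow i i.2))
  have hreach_block (i : {i // i ∉ S}) : ∃ k, 0 < ∑ j, L.toBlock (· ∉ S) (· ∉ S) k j ∧
      Relation.ReflTransGen (fun a b ↦ L.toBlock (· ∉ S) (· ∉ S) a b < 0) i k := by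
    obtain ⟨i, hi⟩ := i
    obtain ⟨s, hs, his⟩ := hreach i hi
    induction his using Relation.ReflTransGen.head_induction_on with
    | refl => exact absurd hs hi
    | @head i k hik _ ih =>
      by_cases hk : k ∈ S
      · refine ⟨⟨i, hi⟩, ?_, .refl⟩
        rw [hrow_eq]
        exact Finset.sum_pos' (fun s _ ↦ hleader _ s) ⟨⟨k, hk⟩, Finset.mem_univ _, neg_pos.2 hik⟩
      · obtain ⟨l, hl, hkl⟩ := ih hk
        exact ⟨l, hl, hkl.head (a := ⟨i, hi⟩) hik⟩
  refine .of_dotProduct_mulVec_pos (by simpa using hsym) fun v hv ↦ ?_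
  rw [star_trivial]
  contrapose! hv
  exact eq_zero_of_dotProduct_mulVec_self_nonpos hsym
    (fun i j hij ↦ hoff i i.2 j (Subtype.coe_ne_coe.2 hij))
    (fun i ↦ (Fintype.sum_nonneg (hleader i)).trans_eq (hrow_eq i).symm) hreach_block hv

end GroundedMatrix

section Spectrum

variable {m 𝕜 : Type*} [Fintype m] [DecidableEq m] [RCLike 𝕜]

open scoped ComplexOrder MatrixOrder

lemma posSemidef_sub_algebraMap_sInf_spectrum {A : Matrix m m 𝕜} (hA : A.IsHermitian) :
    (A - algebraMap ℝ _ (sInf (spectrum ℝ A))).PosSemidef := by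
  have hfin : (spectrum ℝ A).Finite := by
    rw [hA.spectrum_real_eq_range_eigenvalues]
    exact Set.finite_range _
  rw [← Matrix.le_iff, algebraMap_le_iff_le_spectrum (ha := hA)]
  exact fun x hx ↦ csInf_le hfin.bddBelow hx

lemma sInf_spectrum_pos [Nonempty m] {A : Matrix m m 𝕜} (hA : A.PosDef) :
    0 < sInf (spectrum ℝ A) := by
  rw [hA.1.spectrum_real_eq_range_eigenvalues]
  obtain ⟨i, hi⟩ := (Set.range_nonempty hA.1.eigenvalues).csInf_mem (Set.finite_range _)
  exact hi ▸ hA.eigenvalues_pos i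

lemma sInf_spectrum_mul_dotProduct_self_le {A : Matrix m m ℝ} (hA : A.IsHermitian) (v : m → ℝ) :
    sInf (spectrum ℝ A) * (v ⬝ᵥ v) ≤ v ⬝ᵥ A *ᵥ v := by
  simpa [Algebra.algebraMap_eq_smul_one, sub_mulVec, smul_mulVec, dotProduct_sub] using
    (posSemidef_sub_algebraMap_sInf_spectrum hA).dotProduct_mulVec_nonneg v

end Spectrum

section Decay

open Set Filter Topology
open scoped RealInnerProductSpace

lemma norm_le_exp_mul_norm_of_inner_deriv_le {E : Type*} [NormedAddCommGroup E]
    [InnerProductSpace ℝ E] {f f' : ℝ → E} {a K : ℝ}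
    (hf : ∀ t ∈ Ici a, HasDerivWithinAt f (f' t) (Ici a) t)
    (hK : ∀ t ∈ Ici a, ⟪f t, f' t⟫ ≤ K * ‖f t‖ ^ 2) {t : ℝ} (ht : a ≤ t) :
    ‖f t‖ ≤ Real.exp (K * (t - a)) * ‖f a‖ := by
  -- Grönwall is applied to `‖f‖²`, which is differentiable also where `f` vanishes.
  have hderiv s (hs : a ≤ s) : HasDerivWithinAt (‖f ·‖ ^ 2) (2 * ⟪f s, f' s⟫) (Ici a) s :=
    (hf s hs).norm_sq
  refine le_of_sq_le_sq ?_ (by positivity)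
  calc ‖f t‖ ^ 2 ≤ gronwallBound (‖f a‖ ^ 2) (2 * K) 0 (t - a) :=
        le_gronwallBound_of_liminf_deriv_right_le
          (fun s hs ↦ ((hderiv s hs.1).mono Icc_subset_Ici_self).continuousWithinAt)
          (fun s hs _ ↦ ((hderiv s hs.1).mono (Ici_subset_Ici.2 hs.1)).liminf_right_slope_le)
          le_rfl (fun s hs ↦ by linarith [hK s hs.1]) t (right_mem_Icc.2 ht)
    _ = (Real.exp (K * (t - a)) * ‖f a‖) ^ 2 := by
        rw [gronwallBound_ε0, mul_pow, ← Real.exp_nat_mul]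
        push_cast
        ring_nf

lemma norm_toLp_le_exp_of_hasDerivWithinAt_neg_mulVec {m : Type*} [Fintype m] [DecidableEq m]
    {A : Matrix m m ℝ} (hA : A.IsHermitian) {e : ℝ → m → ℝ} {a : ℝ}
    (he : ∀ t ∈ Ici a, HasDerivWithinAt e (-(A *ᵥ e t)) (Ici a) t) {t : ℝ} (ht : a ≤ t) :
    ‖WithLp.toLp 2 (e t)‖ ≤
      Real.exp (-(sInf (spectrum ℝ A) * (t - a))) * ‖WithLp.toLp 2 (e a)‖ := by
  have hderiv s (hs : s ∈ Ici a) :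
      HasDerivWithinAt (fun s ↦ WithLp.toLp 2 (e s)) (WithLp.toLp 2 (-(A *ᵥ e s))) (Ici a) s :=
    (PiLp.hasFDerivAt_toLp (𝕜 := ℝ) 2 (e s)).comp_hasDerivWithinAt s (he s hs)
  have hinner s (_ : s ∈ Ici a) : ⟪WithLp.toLp 2 (e s), WithLp.toLp 2 (-(A *ᵥ e s))⟫ ≤
      -sInf (spectrum ℝ A) * ‖WithLp.toLp 2 (e s)‖ ^ 2 := by
    simp only [← real_inner_self_eq_norm_sq, EuclideanSpace.inner_toLp_toLp, star_trivial,
      neg_dotProduct, neg_mul, neg_le_neg_iff, dotProduct_comm (A *ᵥ e s)]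
    exact sInf_spectrum_mul_dotProduct_self_le hA (e s)
  simpa using norm_le_exp_mul_norm_of_inner_deriv_le hderiv hinner ht

lemma tendsto_zero_of_norm_le_exp {E : Type*} [SeminormedAddCommGroup E] {f : ℝ → E} {c C : ℝ}
    (hc : 0 < c) (hf : ∀ t, 0 ≤ t → ‖f t‖ ≤ Real.exp (-(c * t)) * C) :
    Tendsto f atTop (𝓝 0) := by
  have hexp : Tendsto (fun t ↦ Real.exp (-(c * t)) * C) atTop (𝓝 0) := by
    simpa using (Real.tendsto_exp_neg_atTop_nhds_zero.comp
      (tendsto_id.const_mul_atTop hc)).mul_const C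
  exact squeeze_zero_norm' ((eventually_ge_atTop 0).mono hf) hexp

end Decay

theorem consensus_convergence_general {ι : Type*} [Fintype ι] [DecidableEq ι] (L : Matrix ι ι ℝ)
    (S : Finset ι) (hproper : S ≠ Finset.univ) (hsym : (L.toBlock (· ∉ S) (· ∉ S)).IsSymm)
    (hoff : ∀ i ∉ S, ∀ j, i ≠ j → L i j ≤ 0) (hrow : ∀ i ∉ S, ∑ j, L i j = 0)
    (hreach : ∀ i ∉ S, ∃ s ∈ S, Relation.ReflTransGen (fun j k ↦ L j k < 0) i s)
    (lam : ℝ) (hlam : lam = sInf (spectrum ℝ (L.toBlock (· ∉ S) (· ∉ S))))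
    (xbar : ℝ) (xf : ℝ → {i // i ∉ S} → ℝ)
    (hxf : ∀ t ∈ Set.Ici (0 : ℝ), HasDerivWithinAt xf
      (-(L.toBlock (· ∉ S) (· ∉ S) *ᵥ xf t) - L.toBlock (· ∉ S) (· ∈ S) *ᵥ fun _ ↦ xbar)
      (Set.Ici 0) t) :
    0 < lam ∧
    (∀ t : ℝ, 0 ≤ t →
      √(∑ i, (xf t i - xbar) ^ 2) ≤ Real.exp (-(lam * t)) * √(∑ i, (xf 0 i - xbar) ^ 2)) ∧
    Filter.Tendsto xf Filter.atTop (nhds fun _ ↦ xbar) := by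
  subst hlam
  obtain ⟨i, hi⟩ : ∃ i, i ∉ S := by simpa [Finset.eq_univ_iff_forall] using hproper
  have : Nonempty {i // i ∉ S} := ⟨⟨i, hi⟩⟩
  have hpd := posDef_toBlock_compl hsym hoff hrow hreach
  have herror t (ht : t ∈ Set.Ici (0 : ℝ)) :
      HasDerivWithinAt (fun t ↦ xf t - fun _ ↦ xbar)
        (-(L.toBlock (· ∉ S) (· ∉ S) *ᵥ (xf t - fun _ ↦ xbar))) (Set.Ici 0) t := by
    refine ((hxf t ht).sub_const _).congr_deriv ?_
    rw [eq_neg_of_add_eq_zero_right (toBlock_mulVec_const_add_toBlock_mulVec_const hrow xbar),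
      mulVec_sub]
    abel
  have hdecay t (ht : 0 ≤ t) := norm_toLp_le_exp_of_hasDerivWithinAt_neg_mulVec hpd.1 herror ht
  simp only [sub_zero] at hdecay
  have hpos := sInf_spectrum_pos hpd
  have herror_tendsto :=
    ((PiLp.continuous_ofLp 2 _).tendsto 0).comp (tendsto_zero_of_norm_le_exp hpos hdecay)
  refine ⟨hpos, by simpa [EuclideanSpace.norm_eq] using hdecay, ?_⟩
  simpa [Function.comp_def] using herror_tendsto.add_const fun _ ↦ xbar

/-- leader-follower consensus convergence. Let `L` be a weighted Laplacian
of a connected graph (symmetric, nonpositive off-diagonal entries, zero row sums, and the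
graph with edges `{i,j}` where `L i j < 0` is connected), `S` a nonempty proper leader
set, `lam` the smallest eigenvalue of the grounded Laplacian `L_ff`. If `x_f` solves
`x_f' = −L_ff x_f − L_fl (x̄·𝟏)`, then `lam > 0`, for all `t ≥ 0` the Euclidean norm of
the error satisfies `‖x_f(t) − x̄·𝟏‖ ≤ exp(−lam·t)·‖x_f(0) − x̄·𝟏‖`, and in particular
`x_f(t) → x̄·𝟏` as `t → ∞`. -/
theorem consensus_convergence {n : ℕ} (L : Matrix (Fin n) (Fin n) ℝ)
    (hsym : L.IsSymm)
    (hoff : ∀ i j, i ≠ j → L i j ≤ 0)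
    (hrow : ∀ i, ∑ j, L i j = 0)
    (G : SimpleGraph (Fin n)) (hG : ∀ i j, G.Adj i j ↔ i ≠ j ∧ L i j < 0)
    (hconn : G.Connected)
    (S : Finset (Fin n)) (hne : S.Nonempty) (hproper : S ≠ Finset.univ)
    (lam : ℝ)
    (hlam : lam = sInf (spectrum ℝ
      (L.submatrix (Subtype.val : {i : Fin n // i ∉ S} → Fin n)
        (Subtype.val : {i : Fin n // i ∉ S} → Fin n))))
    (xbar : ℝ) (xf : ℝ → ({i : Fin n // i ∉ S} → ℝ))
    (hxf : ∀ t : ℝ, HasDerivAt xf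
      (-(L.submatrix (Subtype.val : {i : Fin n // i ∉ S} → Fin n)
            (Subtype.val : {i : Fin n // i ∉ S} → Fin n)).mulVec (xf t)
        - (L.submatrix (Subtype.val : {i : Fin n // i ∉ S} → Fin n)
            (Subtype.val : {i : Fin n // i ∈ S} → Fin n)).mulVec (fun _ => xbar)) t) :
    0 < lam ∧
    (∀ t : ℝ, 0 ≤ t →
      Real.sqrt (∑ i, (xf t i - xbar) ^ 2) ≤
        Real.exp (-(lam * t)) * Real.sqrt (∑ i, (xf 0 i - xbar) ^ 2)) ∧
    Filter.Tendsto xf Filter.atTop (nhds (fun _ => xbar)) := by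
  obtain ⟨s, hs⟩ := hne
  have hreach i : Relation.ReflTransGen (fun j k ↦ L j k < 0) i s :=
    .mono (fun j k h ↦ ((hG j k).1 h).2) i s ((G.reachable_iff_reflTransGen i s).1 (hconn i s))
  exact consensus_convergence_general L S hproper (hsym.submatrix _) (fun i _ ↦ hoff i)
    (fun i _ ↦ hrow i) (fun i _ ↦ ⟨s, hs, hreach i⟩) lam hlam xbar xf
    fun t _ ↦ (hxf t).hasDerivWithinAt
end
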